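/- arXiv:2301.01376 — 9 statements merged into one kernel-verified Lean document; each statement's English description precedes it below -/
import Mathlib

section
/- Let c and m be positive integers with c > 1. If m divides c - 1 and cosocle(m) > rad(c), then for each positive integer k, the triple (1, c^k - 1, c^k) is an abc triple. -/
open scoped Classical

/-- The radical of a natural number: the product of its distinct prime factors. -/
def rad (n : ℕ) : ℕ := ∏ p ∈ n.primeFactors, p

/-- The cosocle of a natural number: `n / rad n`. -/
def cosocle (n : ℕ) : ℕ := n / rad n

/-- `(a, b, c)` is an abc triple: `a, b, c` are relatively prime positive integers with
`a + b = c` and `rad (a*b*c) < c`. -/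
def IsABCTriple (a b c : ℕ) : Prop :=
  0 < a ∧ 0 < b ∧ 0 < c ∧ a + b = c ∧
    Nat.Coprime a b ∧ Nat.Coprime a c ∧ Nat.Coprime b c ∧ rad (a * b * c) < c

lemma rad_pos' (n : ℕ) : 0 < rad n :=
  Finset.prod_pos fun _ hp => (Nat.prime_of_mem_primeFactors hp).pos

lemma rad_dvd' (n : ℕ) : rad n ∣ n := Nat.prod_primeFactors_dvd n

lemma rad_mul_le' (a b : ℕ) (ha : a ≠ 0) (hb : b ≠ 0) : rad (a * b) ≤ rad a * rad b := by
  unfold rad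
  rw [Nat.primeFactors_mul ha hb, ← Finset.prod_union_inter]
  apply Nat.le_mul_of_pos_right
  refine Finset.prod_pos fun p hp => ?_
  exact (Nat.prime_of_mem_primeFactors (Finset.mem_inter.1 hp).1).pos

theorem stmt_0 (c m : ℕ) (hc : 1 < c) (hm : 0 < m) (hdvd : m ∣ c - 1)
    (hcos : rad c < cosocle m) :
    ∀ k : ℕ, 0 < k → IsABCTriple 1 (c ^ k - 1) (c ^ k) := by
  intro k hk
  have hck : 1 < c ^ k := Nat.one_lt_pow hk.ne' hc
  have hN : 0 < c ^ k - 1 := by omega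
  have hd : m ∣ c ^ k - 1 := by
    have := Nat.sub_dvd_pow_sub_pow c 1 k
    rw [one_pow] at this
    exact hdvd.trans this
  have hcop : Nat.Coprime (c ^ k - 1) (c ^ k) := by
    have h : c ^ k = (c ^ k - 1) + 1 := by omega
    rw [Nat.coprime_comm]
    nth_rewrite 1 [h]
    simp
  refine ⟨one_pos, hN, by omega, by omega, Nat.coprime_one_left _, Nat.coprime_one_left _, hcop, ?_⟩
  rw [one_mul]
  obtain ⟨q, hq⟩ := hd
  have hq0 : 0 < q := by
    rcases Nat.eq_zero_or_pos q with h | h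
    · subst h; omega
    · exact h
  have h1 : rad ((c ^ k - 1) * c ^ k) ≤ rad (c ^ k - 1) * rad (c ^ k) :=
    rad_mul_le' _ _ hN.ne' (by omega)
  have h2 : rad (c ^ k) = rad c := by
    unfold rad
    rw [Nat.primeFactors_pow _ hk.ne']
  have h3 : rad (c ^ k - 1) ≤ rad m * q := by
    rw [hq]
    exact (rad_mul_le' _ _ hm.ne' hq0.ne').trans
      (Nat.mul_le_mul_left _ (Nat.le_of_dvd hq0 (rad_dvd' q)))
  have h4 : rad m * cosocle m = m := Nat.mul_div_cancel' (rad_dvd' m)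
  calc _ ≤ rad (c ^ k - 1) * rad c := h2 ▸ h1
    _ ≤ (rad m * q) * rad c := Nat.mul_le_mul_right _ h3
    _ ≤ (rad m * q) * cosocle m := Nat.mul_le_mul_left _ hcos.le
    _ = (rad m * cosocle m) * q := by ring
    _ = c ^ k - 1 := by rw [h4, hq]
    _ < c ^ k := by omega
end

section
/- Let b and m be positive integers. If m divides b + 1 and cosocle(m) > rad(b), then for each positive odd integer k, the triple (1, b^k, b^k + 1) is an abc triple. -/
open scoped Classical

lemma rad_mul_le_aux (x y : ℕ) (hx : x ≠ 0) (hy : y ≠ 0) : rad (x * y) ≤ rad x * rad y := by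
  unfold rad
  rw [Nat.primeFactors_mul hx hy, ← Finset.prod_union_inter]
  apply Nat.le_mul_of_pos_right
  apply Finset.prod_pos
  intro p hp
  exact (Nat.prime_of_mem_primeFactors (Finset.mem_inter.1 hp).1).pos

lemma rad_le_aux (x : ℕ) (hx : x ≠ 0) : rad x ≤ x :=
  Nat.le_of_dvd (Nat.pos_of_ne_zero hx) (Nat.prod_primeFactors_dvd x)

lemma rad_pos_aux (x : ℕ) : 0 < rad x :=
  Finset.prod_pos fun _ hp => (Nat.prime_of_mem_primeFactors hp).pos

theorem stmt_1 (b m : ℕ) (hb : 0 < b) (hm : 0 < m) (hdvd : m ∣ b + 1)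
    (hcos : rad b < cosocle m) :
    ∀ k : ℕ, 0 < k → Odd k → IsABCTriple 1 (b ^ k) (b ^ k + 1) := by
  intro k hk hodd
  have hbk : 0 < b ^ k := pow_pos hb k
  refine ⟨one_pos, hbk, Nat.succ_pos _, add_comm _ _, Nat.coprime_one_left _,
    Nat.coprime_one_left _, by simp, ?_⟩
  have h1 : b + 1 ∣ b ^ k + 1 := by
    simpa using hodd.nat_add_dvd_pow_add_pow b 1
  obtain ⟨t, ht⟩ := hdvd.trans h1
  have ht0 : t ≠ 0 := by rintro rfl; simp at ht
  have hrb : rad (b ^ k) = rad b := by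
    unfold rad; rw [Nat.primeFactors_pow b hk.ne']
  have h2 : rad (b ^ k * (b ^ k + 1)) ≤ rad b * rad (b ^ k + 1) := by
    rw [← hrb]; exact rad_mul_le_aux _ _ hbk.ne' (Nat.succ_ne_zero _)
  have h3 : rad (b ^ k + 1) ≤ rad m * t := by
    rw [ht]
    exact (rad_mul_le_aux _ _ hm.ne' ht0).trans (Nat.mul_le_mul_left _ (rad_le_aux t ht0))
  rw [one_mul]
  calc _ ≤ rad b * (rad m * t) := h2.trans (Nat.mul_le_mul_left _ h3)
    _ < cosocle m * (rad m * t) :=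
        Nat.mul_lt_mul_of_pos_right hcos (Nat.mul_pos (rad_pos_aux m) (Nat.pos_of_ne_zero ht0))
    _ = (m / rad m * rad m) * t := by rw [cosocle, mul_assoc]
    _ ≤ m * t := Nat.mul_le_mul_right _ (Nat.div_mul_le_self _ _)
    _ = b ^ k + 1 := ht.symm
end

section
/- If (1, c-1, c) is an abc triple (with c > 1 an integer), then (1, c^k - 1, c^k) is an abc triple for each positive integer k. -/
open scoped Classical

theorem stmt_4 (c : ℕ) (hc : 1 < c) (h : IsABCTriple 1 (c - 1) c) :
    ∀ k : ℕ, 0 < k → IsABCTriple 1 (c ^ k - 1) (c ^ k) := by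
  intro k hk
  obtain ⟨-, -, -, -, -, -, -, hr⟩ := h
  have hrad : ∀ n : ℕ, rad n = UniqueFactorizationMonoid.radical n := fun n =>
    (Nat.radical_eq_prod_primeFactors (n := n)).symm
  have hck : 1 < c ^ k := Nat.one_lt_pow hk.ne' hc
  obtain ⟨S, hS⟩ : c - 1 ∣ c ^ k - 1 := by
    simpa using Nat.sub_dvd_pow_sub_pow c 1 k
  have hS0 : S ≠ 0 := by
    rintro rfl
    omega
  have hc1 : c - 1 ≠ 0 := by omega
  refine ⟨one_pos, by omega, by omega, by omega, Nat.coprime_one_left _,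
    Nat.coprime_one_left _, ?_, ?_⟩
  · have h2 : Nat.Coprime (c ^ k - 1) (c ^ k - 1 + 1) := by simp
    rwa [Nat.sub_add_cancel hck.le] at h2
  · have e : rad (1 * (c ^ k - 1) * c ^ k) = rad (1 * (c - 1) * c * S) := by
      unfold rad
      congr 1
      rw [hS, one_mul, one_mul, Nat.primeFactors_mul (by positivity) (by positivity),
        Nat.primeFactors_mul hc1 hS0, Nat.primeFactors_pow _ hk.ne',
        Nat.primeFactors_mul (by positivity) hS0, Nat.primeFactors_mul hc1 (by omega)]
      ext x
      simp only [Finset.mem_union]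
      tauto
    rw [e]
    rw [hrad] at hr ⊢
    have h1 := Nat.le_of_dvd (Nat.mul_pos (Nat.radical_pos _) (Nat.radical_pos _))
      (UniqueFactorizationMonoid.radical_mul_dvd (a := 1 * (c - 1) * c) (b := S))
    have h3 : UniqueFactorizationMonoid.radical S ≤ S := Nat.radical_le_self_iff.2 hS0
    have h4 := Nat.mul_le_mul (Nat.le_sub_one_of_lt hr) h3
    omega
end

section
/- Let x, y ≥ 2 be integers and let p be a prime dividing x. Then for each integer j with 2 ≤ j ≤ y, one has v_p(x*y) ≤ v_p( binom(y, j) * x^j ), where binom(y, j) is the binomial coefficient. Moreover, equality holds if and only if p = 2, j = 2, x ≡ 2 (mod 4), and y is even. -/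
theorem stmt_6 (x y : ℕ) (hx : 2 ≤ x) (hy : 2 ≤ y) (p : ℕ) (hp : p.Prime) (hpx : p ∣ x)
    (j : ℕ) (hj2 : 2 ≤ j) (hjy : j ≤ y) :
    padicValNat p (x * y) ≤ padicValNat p (y.choose j * x ^ j) ∧
    (padicValNat p (x * y) = padicValNat p (y.choose j * x ^ j) ↔
      p = 2 ∧ j = 2 ∧ x % 4 = 2 ∧ Even y) := by
  haveI : Fact p.Prime := ⟨hp⟩
  have hC : y.choose j ≠ 0 := (Nat.choose_pos hjy).ne'
  have hC' : (y - 1).choose (j - 1) ≠ 0 := (Nat.choose_pos (by omega)).ne'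
  have hx0 : x ≠ 0 := by omega
  have hmul : y * (y - 1).choose (j - 1) = y.choose j * j := by
    have := Nat.add_one_mul_choose_eq (y - 1) (j - 1)
    rwa [Nat.sub_add_cancel (by omega), Nat.sub_add_cancel (by omega)] at this
  have hv := congrArg (padicValNat p) hmul
  rw [padicValNat.mul (by omega) hC', padicValNat.mul hC (by omega)] at hv
  rw [padicValNat.mul hx0 (by omega), padicValNat.mul hC (pow_ne_zero _ hx0), padicValNat.pow]
  have ha : 1 ≤ padicValNat p x := one_le_padicValNat_of_dvd hx0 hpx
  have hle : p ^ padicValNat p j ≤ j := Nat.le_of_dvd (by omega) pow_padicValNat_dvd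
  have h2 : 2 ^ padicValNat p j ≤ j := (Nat.pow_le_pow_left hp.two_le _).trans hle
  have hlt : padicValNat p j < 2 ^ padicValNat p j := Nat.lt_two_pow_self
  by_cases hc : p = 2 ∧ j = 2
  · obtain ⟨rfl, rfl⟩ := hc
    have h1 : padicValNat 2 2 = 1 := padicValNat_self
    simp only [Nat.reduceSub, Nat.choose_one_right, h1] at hv
    have e1 : padicValNat 2 x = 1 ↔ x % 4 = 2 := by
      have h4 := padicValNat_dvd_iff_le (p := 2) (n := 2) hx0
      norm_num at h4
      omega
    have e2 : padicValNat 2 (y - 1) = 0 ↔ Even y := by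
      have h4 := padicValNat_dvd_iff_le (p := 2) (a := y - 1) (n := 1) (by omega)
      rw [Nat.even_iff]
      norm_num at h4
      omega
    simp only [true_and, ← e1, ← e2]
    omega
  · have hs : padicValNat p j < j - 1 := by
      by_contra hcon
      have hk : padicValNat p j = j - 1 := by omega
      apply hc
      rw [hk] at hle h2
      obtain ⟨k, rfl⟩ : ∃ k, j = k + 2 := ⟨j - 2, by omega⟩
      have e : k + 2 - 1 = k + 1 := by omega
      rw [e] at hle h2
      have hk2 : k < 2 ^ k := Nat.lt_two_pow_self
      have hk0 : k = 0 := by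
        rw [pow_succ] at h2
        omega
      subst hk0
      have := hp.two_le
      simp at hle
      omega
    have hja : (j - 1) + padicValNat p x ≤ j * padicValNat p x := by
      obtain ⟨k, rfl⟩ : ∃ k, j = k + 1 := ⟨j - 1, by omega⟩
      simp only [Nat.add_sub_cancel]
      nlinarith
    refine ⟨by omega, ⟨fun h => by omega, fun h => absurd ⟨h.1, h.2.1⟩ hc⟩⟩
end

section
/- Let λ and φ denote the Carmichael function and the Euler totient function, respectively. If m and n are relatively prime positive integers such that cosocle(m) > rad(n) > 1, then (1, n^{λ(m)·k} - 1, n^{λ(m)·k}) and (1, n^{φ(m)·k} - 1, n^{φ(m)·k}) are abc triples for each positive integer k. -/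
open scoped Classical

/-- The Carmichael function: `carmichael m` is the least positive integer `l` such that
`a ^ l ≡ 1 (mod m)` for every integer `a` relatively prime to `m`. -/
noncomputable def carmichael (m : ℕ) : ℕ :=
  sInf {l : ℕ | 0 < l ∧ ∀ a : ℕ, Nat.Coprime a m → a ^ l ≡ 1 [MOD m]}

theorem rad_eq_radical (n : ℕ) : rad n = UniqueFactorizationMonoid.radical n := by
  rw [rad, Nat.radical_eq_prod_primeFactors]

theorem abc_aux (m n e : ℕ) (hn : 1 < n) (he : 0 < e)
    (h2 : rad n < cosocle m) (hmod : n ^ e ≡ 1 [MOD m]) :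
    IsABCTriple 1 (n ^ e - 1) (n ^ e) := by
  have hN : 1 < n ^ e := Nat.one_lt_pow he.ne' hn
  have hdvd : m ∣ n ^ e - 1 := (Nat.modEq_iff_dvd' hN.le).1 hmod.symm
  obtain ⟨q, hq⟩ := hdvd
  have hcop : Nat.Coprime (n ^ e - 1) (n ^ e) := by
    have h : n ^ e = (n ^ e - 1) + 1 := by omega
    rw [h]
    simp
  refine ⟨one_pos, by omega, by omega, by omega, Nat.coprime_one_left _, Nat.coprime_one_left _,
    hcop, ?_⟩
  have hmq : 0 < m * q := by omega
  have hq0 : 0 < q := Nat.pos_of_mul_pos_left hmq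
  have hm0 : 0 < m := Nat.pos_of_mul_pos_right hmq
  have hco : rad m * cosocle m = m := by
    unfold cosocle
    apply Nat.mul_div_cancel'
    rw [rad_eq_radical]
    exact UniqueFactorizationMonoid.radical_dvd_self
  have hle : rad (1 * (n ^ e - 1) * n ^ e) ≤ rad m * q * rad n := by
    rw [one_mul, hq]
    simp only [rad_eq_radical]
    have hd : UniqueFactorizationMonoid.radical (m * q * n ^ e) ∣
        UniqueFactorizationMonoid.radical m * q * UniqueFactorizationMonoid.radical n := by
      refine UniqueFactorizationMonoid.radical_mul_dvd.trans (mul_dvd_mul ?_ ?_)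
      · exact UniqueFactorizationMonoid.radical_mul_dvd.trans
          (mul_dvd_mul_left _ UniqueFactorizationMonoid.radical_dvd_self)
      · exact UniqueFactorizationMonoid.radical_pow_dvd
    exact Nat.le_of_dvd (Nat.mul_pos (Nat.mul_pos (Nat.radical_pos _) hq0) (Nat.radical_pos _)) hd
  have hr : 0 < rad m := by rw [rad_eq_radical]; exact Nat.radical_pos _
  calc rad (1 * (n ^ e - 1) * n ^ e) ≤ rad m * q * rad n := hle
    _ < rad m * q * cosocle m := Nat.mul_lt_mul_of_pos_left h2 (Nat.mul_pos hr hq0)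
    _ = (rad m * cosocle m) * q := by ring
    _ = n ^ e - 1 := by rw [hco, hq]
    _ < n ^ e := by omega

theorem stmt_13 (m n : ℕ) (hm : 0 < m) (hn : 0 < n) (hmn : Nat.Coprime m n)
    (h1 : 1 < rad n) (h2 : rad n < cosocle m) :
    ∀ k : ℕ, 0 < k →
      IsABCTriple 1 (n ^ (carmichael m * k) - 1) (n ^ (carmichael m * k)) ∧
      IsABCTriple 1 (n ^ (Nat.totient m * k) - 1) (n ^ (Nat.totient m * k)) := by
  intro k hk
  have hn1 : 1 < n := by
    rw [rad_eq_radical] at h1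
    exact Nat.one_lt_radical_iff.1 h1
  have htot : 0 < Nat.totient m := Nat.totient_pos.2 hm
  have hne : {l : ℕ | 0 < l ∧ ∀ a : ℕ, Nat.Coprime a m → a ^ l ≡ 1 [MOD m]}.Nonempty :=
    ⟨Nat.totient m, htot, fun a ha => Nat.ModEq.pow_totient ha⟩
  have hc : 0 < carmichael m ∧ ∀ a : ℕ, Nat.Coprime a m → a ^ carmichael m ≡ 1 [MOD m] :=
    Nat.sInf_mem hne
  constructor
  · apply abc_aux m n _ hn1 (Nat.mul_pos hc.1 hk) h2
    rw [pow_mul]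
    simpa using (hc.2 n hmn.symm).pow k
  · apply abc_aux m n _ hn1 (Nat.mul_pos htot hk) h2
    rw [pow_mul]
    simpa using (Nat.ModEq.pow_totient hmn.symm).pow k
end

section
/- Let n > 1 be an integer and let p be an odd prime with p > rad(n). Then for each positive integer k, (1, n^{p·ord_p(n)·k} - 1, n^{p·ord_p(n)·k}) is an abc triple. In particular, if n ≡ 1 (mod p) and p > rad(n), then (1, n^{pk} - 1, n^{pk}) is an abc triple for each positive integer k. -/
open scoped Classical

theorem rad_dvd_aux (N : ℕ) : rad N ∣ N := Nat.prod_primeFactors_dvd N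

theorem rad_mul_le_aux_s15 (a b : ℕ) (ha : a ≠ 0) (hb : b ≠ 0) (h : Nat.Coprime a b) :
    rad (a * b) = rad a * rad b := by
  unfold rad
  rw [h.primeFactors_mul, Finset.prod_union h.disjoint_primeFactors]

theorem abc_aux_s15 (n p j : ℕ) (hn : 1 < n) (hp : p.Prime) (hrad : rad n < p) (hj : 0 < j)
    (h : n ^ j ≡ 1 [MOD p]) : IsABCTriple 1 (n ^ (p * j) - 1) (n ^ (p * j)) := by
  have hpj : p * j ≠ 0 := Nat.mul_ne_zero hp.ne_zero hj.ne'
  have hc : 1 < n ^ (p * j) := Nat.one_lt_pow hpj hn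
  have hdvd : p ^ 2 ∣ n ^ (p * j) - 1 := by
    have h1 : (p : ℤ) ∣ (n : ℤ) ^ j - 1 := by
      have := (Nat.modEq_iff_dvd.mp h.symm)
      simpa using this
    have h2 := dvd_sub_pow_of_dvd_sub h1 1
    rw [← Int.natCast_dvd_natCast, Nat.cast_sub hc.le]
    push_cast
    rw [mul_comm p j, pow_mul]
    simpa using h2
  set c := n ^ (p * j) with hcdef
  have hcop : Nat.Coprime (c - 1) c := by
    have : Nat.Coprime (c - 1) (c - 1 + 1) := by simp
    rwa [Nat.sub_add_cancel hc.le] at this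
  refine ⟨one_pos, by omega, by omega, by omega, by simp, by simp, hcop, ?_⟩
  rw [one_mul, rad_mul_le_aux_s15 _ _ (by omega) (by omega) hcop]
  have hradc : rad c = rad n := by
    unfold rad
    rw [hcdef, Nat.primeFactors_pow _ hpj]
  rw [hradc]
  obtain ⟨t, ht⟩ := hdvd
  have ht0 : t ≠ 0 := by rintro rfl; omega
  have hle : rad (c - 1) ≤ p * t := by
    have e : rad (c - 1) = rad (p * t) := by
      unfold rad
      rw [ht, Nat.primeFactors_mul (pow_ne_zero _ hp.ne_zero) ht0,
        Nat.primeFactors_pow _ two_ne_zero, Nat.primeFactors_mul hp.ne_zero ht0]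
    rw [e]
    exact Nat.le_of_dvd (Nat.pos_of_ne_zero (Nat.mul_ne_zero hp.ne_zero ht0)) (rad_dvd_aux _)
  calc rad (c - 1) * rad n ≤ (p * t) * p := Nat.mul_le_mul hle hrad.le
    _ = c - 1 := by rw [ht]; ring
    _ < c := by omega

theorem stmt_15 (n p : ℕ) (hn : 1 < n) (hp : p.Prime) (hodd : Odd p) (hrad : rad n < p) :
    (∀ k : ℕ, 0 < k →
      IsABCTriple 1 (n ^ (p * orderOf (n : ZMod p) * k) - 1)
        (n ^ (p * orderOf (n : ZMod p) * k))) ∧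
    (n ≡ 1 [MOD p] → ∀ k : ℕ, 0 < k →
      IsABCTriple 1 (n ^ (p * k) - 1) (n ^ (p * k))) := by
  constructor
  · intro k hk
    haveI : Fact p.Prime := ⟨hp⟩
    have hpn : ¬ p ∣ n := by
      intro hd
      have hm : p ∈ n.primeFactors := Nat.mem_primeFactors.mpr ⟨hp, hd, by omega⟩
      have h1 : p ∣ rad n := Finset.dvd_prod_of_mem (fun q => q) hm
      have h2 : 0 < rad n := Nat.pos_of_dvd_of_pos (rad_dvd_aux n) (by omega)
      exact absurd (Nat.le_of_dvd h2 h1) (by omega)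
    have hne : (n : ZMod p) ≠ 0 := by
      rwa [Ne, ZMod.natCast_eq_zero_iff]
    have ho : 0 < orderOf (n : ZMod p) := by
      rw [orderOf_pos_iff, isOfFinOrder_iff_pow_eq_one]
      exact ⟨p - 1, by have := hp.two_le; omega, ZMod.pow_card_sub_one_eq_one hne⟩
    rw [mul_assoc]
    apply abc_aux_s15 n p _ hn hp hrad (Nat.mul_pos ho hk)
    rw [← ZMod.natCast_eq_natCast_iff]
    push_cast
    rw [pow_mul, pow_orderOf_eq_one, one_pow]
  · intro h k hk
    apply abc_aux_s15 n p k hn hp hrad hk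
    simpa using h.pow k
end

section
/- Let n > 1 be an integer that is either odd, or even and not squarefree. Then (1, n^{(n-1)k} - 1, n^{(n-1)k}) is an abc triple for each positive integer k. -/
open scoped Classical

theorem rad_le_aux_s16 (b s : ℕ) (hs : 0 < s) (h : ∀ p, p.Prime → p ∣ b → p ∣ s) : rad b ≤ s := by
  apply Nat.le_of_dvd hs
  unfold rad
  apply Finset.prod_primes_dvd
  · intro p hp
    exact (Nat.prime_of_mem_primeFactors hp).prime
  · intro p hp
    exact h p (Nat.prime_of_mem_primeFactors hp) (Nat.dvd_of_mem_primeFactors hp)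

theorem binom_aux (x j : ℕ) : ∃ q, (x + 1) ^ j = 1 + j * x + q * x ^ 2 := by
  induction j with
  | zero => exact ⟨0, by simp⟩
  | succ j ih =>
    obtain ⟨q, hq⟩ := ih
    refine ⟨j + q * x + q, ?_⟩
    rw [pow_succ, hq]; push_cast; ring

theorem stmt_16 (n : ℕ) (hn : 1 < n) (h : Odd n ∨ (Even n ∧ ¬ Squarefree n)) :
    ∀ k : ℕ, 0 < k →
      IsABCTriple 1 (n ^ ((n - 1) * k) - 1) (n ^ ((n - 1) * k)) := by
  intro k hk
  obtain ⟨x, rfl⟩ : ∃ x, n = x + 1 := ⟨n - 1, by omega⟩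
  have hx : 0 < x := by omega
  simp only [Nat.add_sub_cancel]
  have hxk : 0 < x * k := Nat.mul_pos hx hk
  have hc : 1 < (x + 1) ^ (x * k) := Nat.one_lt_pow hxk.ne' hn
  obtain ⟨q, hq⟩ := binom_aux x (x * k)
  obtain ⟨b, hb⟩ : ∃ b, (x + 1) ^ (x * k) = b + 1 := ⟨(x + 1) ^ (x * k) - 1, by omega⟩
  have hpr : ∀ p, p.Prime → p ∣ b + 1 → p ∣ x + 1 := fun p hp hd =>
    hp.dvd_of_dvd_pow (hb ▸ hd)
  have hbm : b = x * (x * (k + q)) := by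
    have : b + 1 = x * (x * (k + q)) + 1 := by rw [← hb, hq]; ring
    omega
  have hm : 0 < k + q := by omega
  have key : ∃ s t, 0 < s ∧ 0 < t ∧ (∀ p, p.Prime → p ∣ b → p ∣ s) ∧
      (∀ p, p.Prime → p ∣ x + 1 → p ∣ t) ∧ s * t ≤ b := by
    rcases h with h | ⟨-, h⟩
    · obtain ⟨s, hs, hs2⟩ : ∃ s, b = 2 * x * s ∧ (∀ p, p.Prime → p ∣ b → p ∣ s) := by
        obtain ⟨y, hy⟩ : ∃ y, x = 2 * y := by
          obtain ⟨y, hy⟩ := h; exact ⟨y, by omega⟩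
        rcases Nat.even_or_odd' y with ⟨z, hz | hz⟩
        · refine ⟨y * (k + q), by rw [hbm, hy]; ring, ?_⟩
          intro p hp hd
          have h3 : b = 2 * y * (2 * y * (k + q)) := by rw [hbm, hy]
          have h2 : p ∣ 2 → p ∣ y := fun h => h.trans ⟨z, hz⟩
          rw [h3, hp.dvd_mul, hp.dvd_mul, hp.dvd_mul, hp.dvd_mul] at hd
          rw [hp.dvd_mul]
          tauto
        · have h8 : 8 ∣ b := by
            have h1 : (x + 1) ^ 2 ≡ 1 [MOD 8] := by
              have : (x + 1) % 8 = 3 ∨ (x + 1) % 8 = 7 := by omega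
              rcases this with h | h <;> simp [Nat.ModEq, Nat.pow_mod, h]
            have h2 := h1.pow (y * k)
            rw [← pow_mul, one_pow, ← mul_assoc, ← hy, hb] at h2
            unfold Nat.ModEq at h2
            omega
          have hb4 : b = 4 * (y * y * (k + q)) := by rw [hbm, hy]; ring
          have h2 : 2 ∣ y * y * (k + q) := by omega
          have hc2 : Nat.Coprime 2 (y * y) := by
            rw [Nat.coprime_two_left]
            exact (Odd.mul ⟨z, hz⟩ ⟨z, hz⟩)
          obtain ⟨m, hm'⟩ := hc2.dvd_of_dvd_mul_left h2
          refine ⟨x * m, by rw [hbm, hm']; ring, ?_⟩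
          intro p hp hd
          have h2x : p ∣ 2 → p ∣ x := fun h => h.trans ⟨y, hy⟩
          rw [hbm, hm', hp.dvd_mul, hp.dvd_mul, hp.dvd_mul] at hd
          rw [hp.dvd_mul]
          tauto
      have hs0 : 0 < s := by
        rcases Nat.eq_zero_or_pos s with h0 | h0
        · subst h0; omega
        · exact h0
      refine ⟨s, x + 1, hs0, by omega, hs2, fun p _ h => h, ?_⟩
      rw [hs]; nlinarith
    · obtain ⟨d, hd1, hd2⟩ : ∃ d, d * d ∣ x + 1 ∧ ¬ IsUnit d := by
        unfold Squarefree at h; push Not at h; exact h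
      obtain ⟨e, he⟩ := hd1
      have hd0 : d ≠ 1 := by simpa using hd2
      have hde : 0 < d * e := by
        rcases Nat.eq_zero_or_pos (d * e) with h0 | h0
        · rw [mul_assoc, h0] at he; omega
        · exact h0
      have hd : 2 ≤ d := by
        have : d ≠ 0 := by rintro rfl; simp at hde
        omega
      refine ⟨x * (k + q), d * e, by positivity, hde, ?_, ?_, ?_⟩
      · intro p hp hd
        rw [hbm, hp.dvd_mul] at hd
        rcases hd with hd | hd
        · exact hd.mul_right _
        · exact hd
      · intro p hp hd
        rw [he, mul_assoc, hp.dvd_mul] at hd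
        rcases hd with hd | hd
        · exact hd.mul_right _
        · exact hd
      · have : d * e ≤ x := by
          have : 2 * (d * e) ≤ x + 1 := by rw [he, mul_assoc]; gcongr
          omega
        rw [hbm, mul_comm]; gcongr
  obtain ⟨s, t, hs, ht, h1, h2, h3⟩ := key
  rw [hb, Nat.add_sub_cancel]
  refine ⟨one_pos, by omega, by omega, by omega, by simp, by simp, by simp, ?_⟩
  refine lt_of_le_of_lt (rad_le_aux_s16 _ (s * t) (by positivity) ?_) (Nat.lt_succ_of_le h3)
  intro p hp hd
  rw [one_mul, hp.dvd_mul] at hd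
  rcases hd with hd | hd
  · exact (h1 p hp hd).mul_right _
  · exact (h2 p hp (hpr p hp hd)).mul_left _
end

section
/- Let n > 1 be an integer and let k be a positive integer such that (n+1)·k is even. Then (1, n^{(n+1)k} - 1, n^{(n+1)k}) is an abc triple. -/
open scoped Classical

theorem aux_dvd (n : ℤ) (j : ℕ) : (n + 1) ^ 2 ∣ n ^ (j + j) - 1 + (j + j) * (n + 1) := by
  induction j with
  | zero => simp
  | succ j ih =>
    obtain ⟨t, ht⟩ := ih
    refine ⟨n ^ 2 * t + 1 - (j + j) * (n - 1), ?_⟩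
    have e : n ^ (j + 1 + (j + 1)) = n ^ 2 * n ^ (j + j) := by ring
    have h2 : n ^ (j + j) = (n + 1) ^ 2 * t + 1 - (j + j) * (n + 1) := by linarith
    rw [e, h2]
    push_cast
    ring

theorem stmt_17 (n : ℕ) (hn : 1 < n) (k : ℕ) (hk : 0 < k) (heven : Even ((n + 1) * k)) :
    IsABCTriple 1 (n ^ ((n + 1) * k) - 1) (n ^ ((n + 1) * k)) := by
  have hpos : 1 < n ^ ((n + 1) * k) := Nat.one_lt_pow (by positivity) hn
  have hd : (n + 1) ^ 2 ∣ n ^ ((n + 1) * k) - 1 := by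
    obtain ⟨j, hj⟩ := heven
    have h := aux_dvd n j
    have hj' : ((j : ℤ) + j) = (n + 1) * k := by exact_mod_cast hj.symm
    rw [hj', ← hj] at h
    have h3 : ((n : ℤ) + 1) ^ 2 ∣ ((n : ℤ) + 1) * k * (n + 1) := ⟨k, by ring⟩
    have h4 := (dvd_add_left h3).1 h
    zify [hpos.le]
    exact h4
  have hm : (n + 1) * k ≠ 0 := by positivity
  generalize (n + 1) * k = m at *
  have hc : Nat.Coprime (n ^ m - 1) (n ^ m) := by
    have := (Nat.coprime_self_sub_left (m := 1) (n := n ^ m) hpos.le).2 (by simp)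
    exact this
  refine ⟨one_pos, by omega, by omega, by omega, by simp, by simp, hc, ?_⟩
  obtain ⟨t, ht⟩ := hd
  have ht0 : t ≠ 0 := by rintro rfl; simp at ht; omega
  have hle : rad (1 * (n ^ m - 1) * n ^ m) ≤ (n + 1) * t * n := by
    have hne : (n + 1) * t * n ≠ 0 := by positivity
    refine le_trans ?_ (Nat.le_of_dvd (Nat.pos_of_ne_zero hne) (Nat.prod_primeFactors_dvd _))
    refine Finset.prod_le_prod_of_subset_of_one_le' ?_ ?_
    · intro p hp
      have hpp := Nat.prime_of_mem_primeFactors hp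
      have hpd := Nat.dvd_of_mem_primeFactors hp
      refine Nat.mem_primeFactors.2 ⟨hpp, ?_, hne⟩
      rw [one_mul, ht] at hpd
      rcases (hpp.dvd_mul).1 hpd with h | h
      · rcases (hpp.dvd_mul).1 h with h | h
        · exact ((hpp.dvd_of_dvd_pow h).mul_right _).mul_right _
        · exact (h.mul_left _).mul_right _
      · exact (hpp.dvd_of_dvd_pow h).mul_left _
    · intro p hp _
      exact (Nat.prime_of_mem_primeFactors hp).one_le
  refine lt_of_le_of_lt hle ?_
  have h5 : (n + 1) ^ 2 * t + 1 = n ^ m := by omega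
  rw [← h5]
  nlinarith [Nat.zero_le ((n + 1) * t)]
end

section
/- Let n ≥ 3 be an odd integer and let j ≥ 1 be an integer. Then for each positive odd integer k, (1, (n^j - 1)^{nk}, (n^j - 1)^{nk} + 1) is an abc triple. Also, if n is a positive even integer, then (1, n^{(n+1)k}, n^{(n+1)k} + 1) is an abc triple for each positive odd integer k. -/
open scoped Classical

theorem div_aux (n j : ℕ) (hn : 3 ≤ n) (ho : Odd n) (hj : 1 ≤ j) :
    n ^ (j + 1) ∣ (n ^ j - 1) ^ n + 1 := by
  have hp : 1 ≤ n ^ j := Nat.one_le_pow _ _ (by omega)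
  zify [hp]
  have e : ((n : ℤ) ^ j - 1) - (-1) = (n : ℤ) ^ j := by ring
  have hd : (n : ℤ) ∣ ((n : ℤ) ^ j - 1) - (-1) := by
    rw [e]; exact dvd_pow_self _ (by omega)
  have h1 := dvd_geom_sum₂_self hd
  have h2 := geom_sum₂_mul ((n : ℤ) ^ j - 1) (-1) n
  rw [ho.neg_one_pow, e, sub_neg_eq_add] at h2
  rw [← h2, pow_succ']
  exact mul_dvd_mul h1 dvd_rfl

theorem part1 (n j k : ℕ) (hn : 3 ≤ n) (ho : Odd n) (hj : 1 ≤ j) (hk : 0 < k) (hko : Odd k) :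
    IsABCTriple 1 ((n ^ j - 1) ^ (n * k)) ((n ^ j - 1) ^ (n * k) + 1) := by
  have hnj : n ≤ n ^ j := Nat.le_self_pow (by omega) n
  have hdvd : n ^ (j + 1) ∣ (n ^ j - 1) ^ (n * k) + 1 := by
    refine (div_aux n j hn ho hj).trans ?_
    have := hko.nat_add_dvd_pow_add_pow ((n ^ j - 1) ^ n) 1
    rwa [one_pow, ← pow_mul] at this
  have hm0 : 0 < n ^ j - 1 := by omega
  have hmlt : n ^ j - 1 < n ^ j := by omega
  generalize n ^ j - 1 = m at *
  have hb : 0 < m ^ (n * k) := by positivity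
  refine ⟨one_pos, hb, by omega, by omega, by simp, by simp, by simp, ?_⟩
  obtain ⟨t, ht⟩ := hdvd
  have ht0 : 0 < t := by
    rcases Nat.eq_zero_or_pos t with h | h
    · subst h; simp at ht
    · exact h
  have hpf : (1 * m ^ (n * k) * (m ^ (n * k) + 1)).primeFactors = (m * (n * t)).primeFactors := by
    rw [ht, one_mul, Nat.primeFactors_mul (by positivity) (by positivity),
      Nat.primeFactors_mul (by positivity) (by positivity),
      Nat.primeFactors_mul (by positivity) (by positivity),
      Nat.primeFactors_mul (by positivity) (by positivity),
      Nat.primeFactors_pow _ (by positivity), Nat.primeFactors_pow _ (by positivity)]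
  have hle : rad (1 * m ^ (n * k) * (m ^ (n * k) + 1)) ≤ m * (n * t) := by
    unfold rad
    rw [hpf]
    exact Nat.le_of_dvd (by positivity) (Nat.prod_primeFactors_dvd _)
  refine hle.trans_lt ?_
  rw [ht, pow_succ, mul_assoc]
  exact Nat.mul_lt_mul_of_pos_right hmlt (by positivity)

theorem stmt_19 :
    (∀ n j k : ℕ, 3 ≤ n → Odd n → 1 ≤ j → 0 < k → Odd k →
      IsABCTriple 1 ((n ^ j - 1) ^ (n * k)) ((n ^ j - 1) ^ (n * k) + 1)) ∧
    (∀ n k : ℕ, 0 < n → Even n → 0 < k → Odd k →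
      IsABCTriple 1 (n ^ ((n + 1) * k)) (n ^ ((n + 1) * k) + 1)) := by
  refine ⟨part1, fun n k hn he hk hko => ?_⟩
  have h2 : 2 ≤ n := by
    obtain ⟨r, hr⟩ := he
    omega
  have := part1 (n + 1) 1 k (by omega) he.add_one le_rfl hk hko
  simpa using this
end
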